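/- Let r ≥ 1 and 1 ≤ k ≤ r, and let a, b be maps from the nonempty subsets of {1,…,r} to (0,∞) such that a(J) = 1 and b(J) = |J| whenever |J| ≤ k, and such that b is increasing. Then there exists a copula c of order k on [0,1]^r whose tail characteristic equals (a,b): for every nonempty J ⊆ {1,…,r}, td_J(c) = b(J) and tc_J(c) = a(J). -/

import Mathlib

open MeasureTheory Filter
open scoped ENNReal BigOperators

noncomputable section

/-- The unit cube `[0,1]^r`. -/
def cube (r : ℕ) : Set (Fin r → ℝ) := Set.univ.pi fun _ => Set.Icc (0:ℝ) 1

/-- A Borel probability measure on `[0,1]^r` is a copula of order `k` if its pushforward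
under the coordinate projection to any `k`-element set `J` of coordinates is the Lebesgue
measure on `[0,1]^J`. -/
def IsCopulaOfOrder (r k : ℕ) (c : Measure (Fin r → ℝ)) : Prop :=
  IsProbabilityMeasure c ∧ c (cube r) = 1 ∧
    ∀ J : Finset (Fin r), J.card = k →
      c.map (fun v (i : J) => v i.1) =
        Measure.pi fun _ : J => volume.restrict (Set.Icc (0:ℝ) 1)

/-- `liminf_{s→0+} c_J(s) / s^τ` (in `ℝ≥0∞`), where
`c_J(s) = c {u ∈ [0,1]^r : u_i ≤ s ∀ i ∈ J}`. -/
def tailLiminf (r : ℕ) (c : Measure (Fin r → ℝ)) (J : Finset (Fin r)) (τ : ℝ) : ℝ≥0∞ :=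
  Filter.liminf (fun s : ℝ => c ({v | ∀ i ∈ J, v i ≤ s} ∩ cube r) / ENNReal.ofReal (s ^ τ))
    (nhdsWithin 0 (Set.Ioi 0))

/-- The tail degree `td_J(c)`: the infimum of the exponents `τ ≥ 0` with
`liminf_{s→0+} c_J(s)/s^τ = ∞` (equal to `∞` if there is no such exponent). -/
def tailDeg (r : ℕ) (c : Measure (Fin r → ℝ)) (J : Finset (Fin r)) : ℝ≥0∞ :=
  sInf {τ : ℝ≥0∞ | tailLiminf r c J τ.toReal = ⊤}

/-- The tail coefficient `tc_J(c) = liminf_{s→0+} c_J(s)/s^{td_J(c)}`. -/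
def tailCoef (r : ℕ) (c : Measure (Fin r → ℝ)) (J : Finset (Fin r)) : ℝ≥0∞ :=
  tailLiminf r c J (tailDeg r c J).toReal

/-! Symbols in an orthogonal array of strength `k` are cells of a grid of mesh `1 / N`: putting
uniform mass on the boxes given by its rows gives a copula of order `k`. Take `N = p ^ n` and a
two-digit Reed–Solomon array, one row of which is prescribed, while every other row has among any
`k + 1` entries one with nonzero leading digit, i.e. at distance at least `1 / p` from `0`. On
coordinate planes of dimension more than `k`, the mass near the corner then comes from one box,
which is placed so that only planes inside that of `J` see it. Superposing over `n` with weights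
`p ^ (n (k - b))` gives these planes a corner mass of exact order `s ^ b`, with a small total mass
when the sum starts late, so that rescaling makes the lower limit equal to `a J`. In the sum over
all `J`, the pieces with `J` strictly larger than `Z` are negligible in the plane of `Z` because `b`
is increasing. -/

open Polynomial ProbabilityTheory
open scoped Topology

section OrthogonalArrays

variable {ι α β Ω Ω' : Type*} {k : ℕ}

/-- An orthogonal array of strength `k` and index one, with rows indexed by `Ω`, columns by `ι` and
symbols in `α`: every choice of symbols in `k` given columns occurs in exactly one row. -/
def IsOrthogonalArray (k : ℕ) (e : Ω → ι → α) : Prop :=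
  ∀ I : Finset ι, I.card = k → Function.Bijective fun ω => I.restrict (e ω)

lemma IsOrthogonalArray.relabel {e : Ω → ι → α} (he : IsOrthogonalArray k e) (σ : ι → α ≃ β) :
    IsOrthogonalArray k fun ω i => σ i (e ω i) := fun I hI =>
  (Equiv.piCongrRight fun i : I => σ i).bijective.comp (he I hI)

lemma IsOrthogonalArray.twistedProd {e : Ω → ι → α} {f : Ω → Ω' → ι → β}
    (he : IsOrthogonalArray k e) (hf : ∀ ω, IsOrthogonalArray k (f ω)) :
    IsOrthogonalArray k fun (p : Ω × Ω') i => (f p.1 p.2 i, e p.1 i) := by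
  intro I hI
  constructor
  · rintro ⟨ω, η⟩ ⟨ω', η'⟩ h
    obtain rfl : ω = ω' := (he I hI).1 (funext fun i => congrArg Prod.snd (congrFun h i))
    obtain rfl : η = η' := (hf ω I hI).1 (funext fun i => congrArg Prod.fst (congrFun h i))
    rfl
  · intro t
    obtain ⟨ω, hω⟩ := (he I hI).2 fun i => (t i).2
    obtain ⟨η, hη⟩ := (hf ω I hI).2 fun i => (t i).1
    exact ⟨(ω, η), funext fun i => Prod.ext (congrFun hη i) (congrFun hω i)⟩

variable {F K : Type*} [Field F] [Field K]

lemma isOrthogonalArray_eval (k : ℕ) (x : ι ↪ K) :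
    IsOrthogonalArray k fun (f : degreeLT K k) i => (f : K[X]).eval (x i) := by
  classical
  rintro I rfl
  exact (Lagrange.funEquivDegreeLT x.injective.injOn).bijective

lemma exists_eval_ne_zero_of_card_lt (y : ι ↪ F) {f : F[X]} (hf : f ≠ 0) {Z : Finset ι}
    (hZ : f.natDegree < Z.card) : ∃ i ∈ Z, f.eval (y i) ≠ 0 := by
  by_contra! h
  refine hf (eq_zero_of_natDegree_lt_card_of_eval_eq_zero' f (Z.map y) ?_ (by simpa using hZ))
  simpa using h

open Classical in
/-- The symbols of the two-digit Reed–Solomon array. The minor digits are the values of `f`. The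
major digits are the values of `g`, plus `X ^ k` unless `f = 0`: so the polynomial giving the major
digits vanishes only in row `0`, and it has degree at most `k`. -/
def reedSolomonDigits (k : ℕ) (y : ι ↪ F) (x : ι ↪ K)
    (p : degreeLT K k × degreeLT F k) (i : ι) : F × K :=
  ((p.2 : F[X]).eval (y i) + if p.1 = 0 then 0 else y i ^ k, (p.1 : K[X]).eval (x i))

open Classical in
lemma isOrthogonalArray_reedSolomonDigits (k : ℕ) (y : ι ↪ F) (x : ι ↪ K) :
    IsOrthogonalArray k (reedSolomonDigits k y x) :=
  (isOrthogonalArray_eval k x).twistedProd fun f =>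
    (isOrthogonalArray_eval k y).relabel fun i => Equiv.addRight (if f = 0 then 0 else y i ^ k)

lemma exists_reedSolomonDigits_fst_ne_zero (y : ι ↪ F) (x : ι ↪ K)
    {p : degreeLT K k × degreeLT F k} (hp : p ≠ 0) {Z : Finset ι} (hZ : k < Z.card) :
    ∃ i ∈ Z, (reedSolomonDigits k y x p i).1 ≠ 0 := by
  obtain ⟨f, g⟩ := p
  have hg : (g : F[X]).degree < k := mem_degreeLT.1 g.2
  by_cases hf : f = 0
  · have hg0 : (g : F[X]) ≠ 0 := fun h => hp (Prod.ext hf (Subtype.ext h))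
    have hdeg : (g : F[X]).natDegree < k := (natDegree_lt_iff_degree_lt hg0).2 hg
    simpa [reedSolomonDigits, hf] using exists_eval_ne_zero_of_card_lt y hg0 (hdeg.trans hZ)
  · have hmonic : (X ^ k + (g : F[X])).Monic := monic_X_pow_add hg
    have hdeg : (X ^ k + (g : F[X])).natDegree = k := natDegree_eq_of_degree_eq_some <| by
      rw [degree_add_eq_left_of_degree_lt (by simpa using hg), degree_X_pow]
    simpa [reedSolomonDigits, hf, add_comm] using
      exists_eval_ne_zero_of_card_lt y hmonic.ne_zero (hdeg.trans_lt hZ)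

lemma exists_isOrthogonalArray_fin [Fintype F] [Fintype K] (k : ℕ) (y : ι ↪ F) (x : ι ↪ K)
    (c : ι → Fin (Fintype.card K)) :
    ∃ e : degreeLT K k × degreeLT F k → ι → Fin (Fintype.card F * Fintype.card K),
      IsOrthogonalArray k e ∧ (∀ i, (e 0 i : ℕ) = c i) ∧
      ∀ p ≠ 0, ∀ Z : Finset ι, k < Z.card → ∃ i ∈ Z, Fintype.card K ≤ e p i := by
  classical
  let zero : Fin (Fintype.card F) := ⟨0, Fintype.card_pos⟩
  let τ : F ≃ Fin (Fintype.card F) := (Fintype.equivFin F).setValue 0 zero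
  let σ (i : ι) : K ≃ Fin (Fintype.card K) := (Fintype.equivFin K).setValue 0 (c i)
  have hτ : τ 0 = zero := Equiv.setValue_eq ..
  have hσ (i : ι) : σ i 0 = c i := Equiv.setValue_eq ..
  refine ⟨_, (isOrthogonalArray_reedSolomonDigits k y x).relabel
    fun i => (τ.prodCongr (σ i)).trans finProdFinEquiv, fun i => ?_, fun p hp Z hZ => ?_⟩
  · simp [reedSolomonDigits, hτ, hσ, zero]
  · obtain ⟨i, hi, hne⟩ := exists_reedSolomonDigits_fst_ne_zero y x hp hZ
    refine ⟨i, hi, ?_⟩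
    have hpos : 0 < (τ (reedSolomonDigits k y x p i).1 : ℕ) := by
      refine Nat.pos_of_ne_zero fun h => hne (τ.injective ?_)
      rw [hτ]
      exact Fin.ext h
    simpa using (Nat.le_mul_of_pos_right _ hpos).trans (Nat.le_add_left _ _)

end OrthogonalArrays

section UniformMarginals

variable {ι : Type*} {k : ℕ} {t : ℝ≥0∞} {μ : Measure (ι → ℝ)}

/-- All `k`-dimensional marginals of `μ` are `t` times the uniform distribution on the unit cube.
For `t = 1` this is the defining property of a copula of order `k`; the factor `t` makes the notion
stable under sums, so that copulas can be assembled from pieces of total mass one. -/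
def HasUniformMarginals (k : ℕ) (t : ℝ≥0∞) (μ : Measure (ι → ℝ)) : Prop :=
  ∀ J : Finset ι, J.card = k →
    μ.map J.restrict = t • Measure.pi fun _ : J => volume.restrict (Set.Icc (0 : ℝ) 1)

/-- The points whose coordinates in `J` are at most `s`. -/
def lowerCorner (J : Finset ι) (s : ℝ) : Set (ι → ℝ) := {v | ∀ i ∈ J, v i ≤ s}

lemma lowerCorner_eq_pi (J : Finset ι) (s : ℝ) :
    lowerCorner J s = (J : Set ι).pi fun _ => Set.Iic s := rfl

lemma lowerCorner_eq_restrict_preimage (J : Finset ι) (s : ℝ) :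
    lowerCorner J s = J.restrict ⁻¹' Set.univ.pi fun _ => Set.Iic s := by
  ext v
  simp [lowerCorner, -Set.pi_univ_Iic]

lemma measurableSet_lowerCorner (J : Finset ι) (s : ℝ) : MeasurableSet (lowerCorner J s) :=
  .pi J.countable_toSet fun _ _ => measurableSet_Iic

instance isProbabilityMeasure_restrict_Icc_zero_one :
    IsProbabilityMeasure (volume.restrict (Set.Icc (0 : ℝ) 1)) := ⟨by simp⟩

namespace HasUniformMarginals

lemma smul (A : ℝ≥0∞) (h : HasUniformMarginals k t μ) : HasUniformMarginals k (A * t) (A • μ) :=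
  fun J hJ => by rw [Measure.map_smul, h J hJ, smul_smul]

lemma add {t' : ℝ≥0∞} {μ' : Measure (ι → ℝ)} (h : HasUniformMarginals k t μ)
    (h' : HasUniformMarginals k t' μ') : HasUniformMarginals k (t + t') (μ + μ') :=
  fun J hJ => by rw [Measure.map_add _ _ (by fun_prop), h J hJ, h' J hJ, add_smul]

lemma sum {κ : Type*} {t : κ → ℝ≥0∞} {μ : κ → Measure (ι → ℝ)}
    (h : ∀ n, HasUniformMarginals k (t n) (μ n)) :
    HasUniformMarginals k (∑' n, t n) (Measure.sum μ) := by
  intro J hJ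
  rw [Measure.map_sum (Measurable.aemeasurable (by fun_prop))]
  ext A hA
  simp only [Measure.sum_apply _ hA, h _ J hJ, Measure.smul_apply, smul_eq_mul,
    ENNReal.tsum_mul_right]

lemma mono [Fintype ι] {j : ℕ} (h : HasUniformMarginals k t μ) (hjk : j ≤ k)
    (hk : k ≤ Fintype.card ι) : HasUniformMarginals j t μ := by
  classical
  intro J hJ
  obtain ⟨I, hJI, -, hI⟩ :=
    Finset.exists_subsuperset_card_eq J.subset_univ (hJ.trans_le hjk) (by simpa using hk)
  calc μ.map J.restrict = (μ.map I.restrict).map (Finset.restrict₂ (π := fun _ => ℝ) hJI) :=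
        (Measure.map_map (Finset.measurable_restrict₂ hJI) (Finset.measurable_restrict I)).symm
    _ = t • Measure.pi fun _ : J => volume.restrict (Set.Icc (0 : ℝ) 1) := by
        rw [h I hI, Measure.map_smul, ← isProjectiveMeasureFamily_pi
          (fun _ : ι => volume.restrict (Set.Icc (0 : ℝ) 1)) I J hJI]

lemma measure_lowerCorner {J : Finset ι} (h : HasUniformMarginals J.card t μ) {s : ℝ}
    (hs : s ≤ 1) : μ (lowerCorner J s) = t * ENNReal.ofReal s ^ J.card := by
  have hIic : volume.restrict (Set.Icc (0 : ℝ) 1) (Set.Iic s) = ENNReal.ofReal s := by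
    rw [Measure.restrict_apply measurableSet_Iic, Set.inter_comm, ← Set.Ici_inter_Iic,
      Set.inter_assoc, Set.Iic_inter_Iic, inf_eq_right.2 hs, Set.Ici_inter_Iic, Real.volume_Icc,
      sub_zero]
  rw [lowerCorner_eq_restrict_preimage, ← Measure.map_apply (by fun_prop)
    (.univ_pi fun _ => measurableSet_Iic), h J rfl, Measure.smul_apply, Measure.pi_pi]
  simp [hIic]

lemma measure_univ_eq (h : HasUniformMarginals 0 t μ) : μ Set.univ = t := by
  simpa [lowerCorner] using h.measure_lowerCorner (J := ∅) zero_le_one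

lemma ae_mem_Icc (h : HasUniformMarginals 1 t μ) (i : ι) : ∀ᵐ v ∂μ, v i ∈ Set.Icc (0 : ℝ) 1 := by
  let i' : ({i} : Finset ι) := ⟨i, Finset.mem_singleton_self i⟩
  have hmarginal : ∀ᵐ u ∂(μ.map (Finset.restrict {i})), u i' ∈ Set.Icc (0 : ℝ) 1 := by
    rw [h {i} (Finset.card_singleton i)]
    exact Measure.ae_smul_measure
      ((Measure.tendsto_eval_ae_ae (i := i')).eventually (ae_restrict_mem measurableSet_Icc)) t
  exact ae_of_ae_map (Finset.measurable_restrict {i}).aemeasurable hmarginal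

lemma isCopulaOfOrder {r : ℕ} {c : Measure (Fin r → ℝ)} (h : HasUniformMarginals k 1 c)
    (hk : 1 ≤ k) (hkr : k ≤ r) : IsCopulaOfOrder r k c := by
  have hcard : k ≤ Fintype.card (Fin r) := by simpa using hkr
  have hprob : IsProbabilityMeasure c := ⟨(h.mono k.zero_le hcard).measure_univ_eq⟩
  refine ⟨hprob, ?_, fun J hJ => (h J hJ).trans (one_smul _ _)⟩
  have hcube : ∀ᵐ v ∂c, v ∈ cube r := by
    simpa only [cube, Set.mem_univ_pi] using ae_all_iff.2 (h.mono hk hcard).ae_mem_Icc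
  exact (mem_ae_iff_prob_eq_one (.univ_pi fun _ => measurableSet_Icc)).1 hcube

end HasUniformMarginals

end UniformMarginals

section GridMeasures

/-- The uniform distribution on the `j`-th of the `N` cells into which the grid of mesh `1 / N`
divides `(0, 1]`. -/
def cellMeasure (N j : ℕ) : Measure ℝ := volume[|Set.Ioc ((j : ℝ) / N) ((j + 1 : ℝ) / N)]

lemma volume_Ioc_cell (N j : ℕ) : volume (Set.Ioc ((j : ℝ) / N) ((j + 1 : ℝ) / N)) =
    ENNReal.ofReal (N : ℝ)⁻¹ := by
  rw [Real.volume_Ioc, ← sub_div, add_sub_cancel_left, one_div]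

lemma volume_Ioc_cell_ne_zero (N j : ℕ) [NeZero N] :
    volume (Set.Ioc ((j : ℝ) / N) ((j + 1 : ℝ) / N)) ≠ 0 := by
  rw [volume_Ioc_cell]
  simp [Nat.pos_of_neZero N]

instance isProbabilityMeasure_cellMeasure (N j : ℕ) [NeZero N] :
    IsProbabilityMeasure (cellMeasure N j) :=
  cond_isProbabilityMeasure_of_finite (volume_Ioc_cell_ne_zero N j)
    measure_Ioc_lt_top.ne

lemma inv_natCast_smul_cellMeasure (N j : ℕ) [NeZero N] : (N : ℝ≥0∞)⁻¹ • cellMeasure N j =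
    volume.restrict (Set.Ioc ((j : ℝ) / N) ((j + 1 : ℝ) / N)) := by
  have hN : (0 : ℝ) < N := Nat.cast_pos.2 (Nat.pos_of_neZero N)
  rw [cellMeasure, ProbabilityTheory.cond, volume_Ioc_cell, ENNReal.ofReal_inv_of_pos hN,
    ENNReal.ofReal_natCast, inv_inv, smul_smul,
    ENNReal.inv_mul_cancel (NeZero.ne _) (ENNReal.natCast_ne_top N), one_smul]

lemma sum_range_restrict_Ioc_cell (N n : ℕ) :
    ∑ j ∈ Finset.range n, volume.restrict (Set.Ioc ((j : ℝ) / N) ((j + 1 : ℝ) / N)) =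
      volume.restrict (Set.Ioc 0 ((n : ℝ) / N)) := by
  induction n with
  | zero => simp
  | succ n ih =>
    rw [Finset.sum_range_succ, ih, ← Measure.restrict_union (Set.Ioc_disjoint_Ioc_of_le le_rfl)
      measurableSet_Ioc, Set.Ioc_union_Ioc_eq_Ioc (by positivity) (by gcongr; linarith),
      Nat.cast_succ]

lemma sum_inv_natCast_smul_cellMeasure (N : ℕ) [NeZero N] :
    ∑ j : Fin N, (N : ℝ≥0∞)⁻¹ • cellMeasure N j = volume.restrict (Set.Icc (0 : ℝ) 1) := by
  simp_rw [inv_natCast_smul_cellMeasure]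
  rw [Fin.sum_univ_eq_sum_range
    fun j => volume.restrict (Set.Ioc ((j : ℝ) / N) ((j + 1 : ℝ) / N)),
    sum_range_restrict_Ioc_cell, div_self (NeZero.ne _), restrict_Ioc_eq_restrict_Icc]

lemma cellMeasure_Iic_eq_zero {N j : ℕ} {s : ℝ} (hs : s ≤ j / N) :
    cellMeasure N j (Set.Iic s) = 0 := by
  rw [cellMeasure, cond_apply measurableSet_Ioc,
    (Set.Iic_disjoint_Ioc hs).symm.inter_eq, measure_empty, mul_zero]

lemma cellMeasure_Iic_eq_one {N j : ℕ} [NeZero N] {s : ℝ} (hs : (j + 1 : ℝ) / N ≤ s) :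
    cellMeasure N j (Set.Iic s) = 1 := by
  have hcell : cellMeasure N j (Set.Ioc ((j : ℝ) / N) ((j + 1 : ℝ) / N)) = 1 :=
    cond_apply_self (volume_Ioc_cell_ne_zero N j) measure_Ioc_lt_top.ne
  exact prob_le_one.antisymm (hcell ▸ measure_mono fun x hx => hx.2.trans hs)

variable {ι Ω α X : Type*} [Fintype ι] {k : ℕ}

lemma pi_map_restrict [MeasurableSpace X] (ν : ι → Measure X) [∀ i, IsProbabilityMeasure (ν i)]
    (I : Finset ι) : (Measure.pi ν).map I.restrict = Measure.pi fun i : I => ν i := by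
  rw [← Measure.infinitePi_eq_pi, Measure.infinitePi_map_restrict]

lemma sum_smul_pi [DecidableEq ι] [Fintype α] [MeasurableSpace X] (ν : α → Measure X)
    [∀ a, IsProbabilityMeasure (ν a)] (w : ℝ≥0∞) [SigmaFinite (∑ a, w • ν a)] :
    ∑ y : ι → α, w ^ Fintype.card ι • Measure.pi (fun i => ν (y i)) =
      Measure.pi fun _ => ∑ a, w • ν a := by
  refine (Measure.pi_eq fun A _ => ?_).symm
  simp only [Measure.coe_finsetSum, Finset.sum_apply, Measure.smul_apply, Measure.pi_pi,
    smul_eq_mul, Finset.prod_univ_sum, Fintype.piFinset_univ, Finset.prod_mul_distrib,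
    Finset.prod_const, Finset.card_univ]

lemma IsOrthogonalArray.map_restrict_sum_smul_pi [Fintype α] [MeasurableSpace X]
    {e : Ω → ι → α} (he : IsOrthogonalArray k e) (ν : α → Measure X)
    [∀ a, IsProbabilityMeasure (ν a)] (w : ℝ≥0∞) [SigmaFinite (∑ a, w • ν a)] {I : Finset ι}
    (hI : I.card = k) :
    (Measure.sum fun ω => w ^ k • Measure.pi fun i => ν (e ω i)).map I.restrict =
      Measure.pi fun _ : I => ∑ a, w • ν a := by
  classical
  simp_rw [Measure.map_sum (Finset.measurable_restrict I).aemeasurable, Measure.map_smul,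
    pi_map_restrict]
  ext A hA
  rw [← sum_smul_pi, Measure.sum_apply _ hA, Measure.finsetSum_apply,
    ← tsum_fintype (L := .unconditional _), ← (Equiv.ofBijective _ (he I hI)).tsum_eq]
  simp [hI]

/-- The superposition of the uniform distributions on the grid cells whose positions are the rows
of `e`, each with mass `N⁻¹ ^ k`. -/
def gridMeasure (k N : ℕ) (e : Ω → ι → Fin N) : Measure (ι → ℝ) :=
  Measure.sum fun ω => (N : ℝ≥0∞)⁻¹ ^ k • Measure.pi fun i => cellMeasure N (e ω i)

lemma IsOrthogonalArray.hasUniformMarginals_gridMeasure {N : ℕ} [NeZero N] {e : Ω → ι → Fin N}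
    (he : IsOrthogonalArray k e) : HasUniformMarginals k 1 (gridMeasure k N e) := by
  intro I hI
  have hsum := sum_inv_natCast_smul_cellMeasure N
  have : SigmaFinite (∑ j : Fin N, (N : ℝ≥0∞)⁻¹ • cellMeasure N j) := hsum ▸ inferInstance
  rw [one_smul, gridMeasure, he.map_restrict_sum_smul_pi (fun j : Fin N => cellMeasure N j) _ hI,
    hsum]

lemma pi_cellMeasure_lowerCorner {N : ℕ} [NeZero N] (c : ι → ℕ) (Z : Finset ι) (s : ℝ) :
    Measure.pi (fun i => cellMeasure N (c i)) (lowerCorner Z s) =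
      ∏ i ∈ Z, cellMeasure N (c i) (Set.Iic s) := by
  rw [lowerCorner_eq_pi, Measure.pi_pi_finset]

lemma gridMeasure_lowerCorner {N : ℕ} [NeZero N] (e : Ω → ι → Fin N) (Z : Finset ι) (s : ℝ) :
    gridMeasure k N e (lowerCorner Z s) =
      ∑' ω, (N : ℝ≥0∞)⁻¹ ^ k * ∏ i ∈ Z, cellMeasure N (e ω i) (Set.Iic s) := by
  simp only [gridMeasure, Measure.sum_apply _ (measurableSet_lowerCorner Z s), Measure.smul_apply,
    pi_cellMeasure_lowerCorner, smul_eq_mul]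

open Classical in
lemma exists_gridMeasure_lowerCorner_eq {ι F K : Type*} [Field F] [Fintype F] [Field K] [Fintype K]
    (k : ℕ) (y : ι ↪ F) (x : ι ↪ K) (J : Finset ι) :
    ∃ m : Measure (ι → ℝ), HasUniformMarginals k 1 m ∧
      ∀ Z : Finset ι, k < Z.card → ∀ s : ℝ, s ≤ (2 * Fintype.card F : ℝ)⁻¹ →
        m (lowerCorner Z s) = if Z ⊆ J then
          (((Fintype.card F * Fintype.card K : ℕ) : ℝ≥0∞)⁻¹) ^ k *
            cellMeasure (Fintype.card F * Fintype.card K) 1 (Set.Iic s) ^ Z.card else 0 := by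
  let := Fintype.ofInjective y y.injective
  have hQ : 1 < Fintype.card K := Fintype.one_lt_card
  obtain ⟨e, he, he0, hfar⟩ := exists_isOrthogonalArray_fin k y x
    fun i => if i ∈ J then ⟨1, hQ⟩ else ⟨Fintype.card K - 1, by lia⟩
  refine ⟨gridMeasure k _ e, he.hasUniformMarginals_gridMeasure, fun Z hZ s hs => ?_⟩
  have hcell {j : ℕ} (hj : Fintype.card K - 1 ≤ j) :
      cellMeasure (Fintype.card F * Fintype.card K) j (Set.Iic s) = 0 := by
    refine cellMeasure_Iic_eq_zero (hs.trans ?_)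
    have hK : (Fintype.card K : ℝ) ≤ 2 * j := by exact_mod_cast (by lia : Fintype.card K ≤ 2 * j)
    rw [Nat.cast_mul, inv_eq_one_div, div_le_div_iff₀ (by positivity) (by positivity)]
    calc (1 : ℝ) * (Fintype.card F * Fintype.card K)
        ≤ Fintype.card F * (2 * j) := by rw [one_mul]; gcongr
      _ = j * (2 * Fintype.card F) := by ring
  rw [gridMeasure_lowerCorner, tsum_eq_single 0]
  · split_ifs with hZJ
    · rw [Finset.prod_eq_pow_card fun i hi => by rw [he0, if_pos (hZJ hi)]]
    · obtain ⟨i, hi, hiJ⟩ := Finset.not_subset.1 hZJ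
      rw [Finset.prod_eq_zero hi (hcell (by simp [he0, hiJ])), mul_zero]
  · intro p hp
    obtain ⟨i, hi, hle⟩ := hfar p hp Z hZ
    rw [Finset.prod_eq_zero hi (hcell (by lia)), mul_zero]

open Classical in
lemma exists_prime_pow_gridMeasure_lowerCorner_eq (k : ℕ) {p n : ℕ} (hp : p.Prime)
    (hcard : Fintype.card ι ≤ p) (hn : 2 ≤ n) (J : Finset ι) :
    ∃ m : Measure (ι → ℝ), HasUniformMarginals k 1 m ∧
      ∀ Z : Finset ι, k < Z.card → ∀ s : ℝ, s ≤ (2 * p : ℝ)⁻¹ →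
        m (lowerCorner Z s) = if Z ⊆ J then
          (((p ^ n : ℕ) : ℝ≥0∞)⁻¹) ^ k * cellMeasure (p ^ n) 1 (Set.Iic s) ^ Z.card else 0 := by
  obtain ⟨n, rfl⟩ := Nat.exists_eq_add_of_le' hn
  have : Fact p.Prime := ⟨hp⟩
  let := Fintype.ofFinite (GaloisField p (n + 1))
  have hK : Fintype.card (GaloisField p (n + 1)) = p ^ (n + 1) := by
    rw [← Nat.card_eq_fintype_card, GaloisField.card p (n + 1) n.succ_ne_zero]
  obtain ⟨y⟩ : Nonempty (ι ↪ ZMod p) :=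
    Function.Embedding.nonempty_of_card_le (by simpa [ZMod.card] using hcard)
  obtain ⟨x⟩ : Nonempty (ι ↪ GaloisField p (n + 1)) :=
    Function.Embedding.nonempty_of_card_le
      (hK ▸ hcard.trans (Nat.le_self_pow n.succ_ne_zero p))
  simpa only [hK, ZMod.card, ← pow_succ'] using exists_gridMeasure_lowerCorner_eq k y x J

end GridMeasures

section GeometricSuperposition

lemma natCast_rpow_neg_pow {p : ℕ} (hp : 0 < p) (b : ℝ) (n : ℕ) :
    ((p : ℝ≥0∞) ^ (-b)) ^ n = ENNReal.ofReal ((((p : ℝ) ^ n)⁻¹) ^ b) := by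
  have hp' : (0 : ℝ) < p := Nat.cast_pos.2 hp
  rw [← ENNReal.ofReal_natCast, ENNReal.ofReal_rpow_of_pos hp',
    ← ENNReal.ofReal_pow (by positivity), Real.inv_rpow (by positivity),
    ← Real.rpow_natCast_mul hp'.le, mul_comm, Real.rpow_mul hp'.le, Real.rpow_natCast,
    Real.rpow_neg hp'.le, inv_pow]

lemma natCast_rpow_sub_pow_mul_inv_pow {p : ℕ} (hp : 0 < p) (k n : ℕ) (b : ℝ) :
    ((p : ℝ≥0∞) ^ (k - b)) ^ n * ((p ^ n : ℕ) : ℝ≥0∞)⁻¹ ^ k = ((p : ℝ≥0∞) ^ (-b)) ^ n := by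
  have hinv : ((p ^ n : ℕ) : ℝ≥0∞)⁻¹ ^ k = ((p : ℝ≥0∞) ^ (-k : ℝ)) ^ n := by
    rw [ENNReal.rpow_neg, ENNReal.rpow_natCast, Nat.cast_pow, ENNReal.inv_pow, ENNReal.inv_pow,
      pow_right_comm]
  rw [hinv, ← mul_pow, ← ENNReal.rpow_add _ _ (by exact_mod_cast hp.ne') (ENNReal.natCast_ne_top p)]
  congr 2
  ring

lemma natCast_rpow_lt_one_of_neg {p : ℕ} (hp : 1 < p) {b : ℝ} (hb : b < 0) :
    (p : ℝ≥0∞) ^ b < 1 :=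
  ENNReal.rpow_lt_one_of_one_lt_of_neg (by exact_mod_cast hp) hb

lemma inv_one_sub_ne_top {q : ℝ≥0∞} (hq : q < 1) : (1 - q)⁻¹ ≠ ⊤ :=
  ENNReal.inv_ne_top.2 (tsub_pos_of_lt hq).ne'

lemma tsum_le_pow_mul_inv_one_sub {q : ℝ≥0∞} {g : ℕ → ℝ≥0∞} {l : ℕ} (hg : ∀ n, g n ≤ q ^ n)
    (h0 : ∀ n < l, g n = 0) : ∑' n, g n ≤ q ^ l * (1 - q)⁻¹ := by
  rw [← Summable.sum_add_tsum_nat_add' (f := g) (k := l) ENNReal.summable,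
    Finset.sum_eq_zero fun n hn => h0 n (Finset.mem_range.1 hn), zero_add,
    ← ENNReal.tsum_geometric, ← ENNReal.tsum_mul_left]
  exact ENNReal.tsum_le_tsum fun n => (hg _).trans_eq (by rw [add_comm, pow_add])

variable {p : ℕ} {b s : ℝ} {g : ℕ → ℝ≥0∞}

lemma tsum_rpow_neg_pow_mul_le (hp : 1 < p) (hb : 0 < b) (hs : s ∈ Set.Ioc 0 1)
    (hg : ∀ n, g n ≤ 1) (hg0 : ∀ n, s ≤ ((p : ℝ) ^ n)⁻¹ → g n = 0) :
    ∑' n, ((p : ℝ≥0∞) ^ (-b)) ^ n * g n ≤ (1 - (p : ℝ≥0∞) ^ (-b))⁻¹ * ENNReal.ofReal (s ^ b) := by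
  have hp' : (1 : ℝ) < p := by exact_mod_cast hp
  obtain ⟨l, hl, hl'⟩ := exists_nat_pow_near ((one_le_inv₀ hs.1).2 hs.2) hp'
  have hvanish (n : ℕ) (hn : n < l + 1) : ((p : ℝ≥0∞) ^ (-b)) ^ n * g n = 0 := by
    have hpow : (p : ℝ) ^ n ≤ s⁻¹ := (pow_le_pow_right₀ hp'.le (Nat.le_of_lt_succ hn)).trans hl
    rw [hg0 n ((le_inv_comm₀ (by positivity) hs.1).1 hpow), mul_zero]
  have hscale : (((p : ℝ) ^ (l + 1))⁻¹) ^ b ≤ s ^ b :=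
    Real.rpow_le_rpow (by positivity) (inv_lt_of_inv_lt₀ hs.1 hl').le hb.le
  calc _ ≤ ((p : ℝ≥0∞) ^ (-b)) ^ (l + 1) * (1 - (p : ℝ≥0∞) ^ (-b))⁻¹ :=
        tsum_le_pow_mul_inv_one_sub (fun n => mul_le_of_le_one_right' (hg n)) hvanish
    _ ≤ _ := by
        rw [natCast_rpow_neg_pow (by lia), mul_comm]
        gcongr

lemma rpow_mul_le_tsum_rpow_neg_pow_mul {m : ℕ} (hp : 1 < p) (hb : 0 < b) (hs : 0 < s)
    (hsm : s ≤ 2 / (p : ℝ) ^ m) (hg : ∀ n, 2 / (p : ℝ) ^ n ≤ s → g n = 1) :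
    ENNReal.ofReal ((2 * p : ℝ)⁻¹ ^ b) * ENNReal.ofReal (s ^ b) ≤
      ∑' n, ((p : ℝ≥0∞) ^ (-b)) ^ (n + m) * g (n + m) := by
  have hp' : (1 : ℝ) < p := by exact_mod_cast hp
  have hpm : (p : ℝ) ^ m ≤ 2 / s := (le_div_comm₀ (by positivity) hs).2 hsm
  obtain ⟨l, hl, hl'⟩ := exists_nat_pow_near ((one_le_pow₀ hp'.le).trans hpm) hp'
  obtain ⟨n, hn⟩ := Nat.exists_eq_add_of_le' ((pow_lt_pow_iff_right₀ hp').1 (hpm.trans_lt hl')).le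
  have hscale : (2 * p : ℝ)⁻¹ * s ≤ ((p : ℝ) ^ (l + 1))⁻¹ := by
    rw [le_div_iff₀ hs] at hl
    rw [inv_mul_le_iff₀ (by positivity), ← div_eq_mul_inv, le_div_iff₀ (by positivity), pow_succ]
    calc s * (p ^ l * p) = p ^ l * s * p := by ring
      _ ≤ 2 * p := by gcongr
  calc _ = ENNReal.ofReal (((2 * p : ℝ)⁻¹ * s) ^ b) := by
        rw [← ENNReal.ofReal_mul (by positivity), Real.mul_rpow (by positivity) hs.le]
    _ ≤ ((p : ℝ≥0∞) ^ (-b)) ^ (l + 1) := by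
        rw [natCast_rpow_neg_pow (by lia)]
        gcongr
    _ = ((p : ℝ≥0∞) ^ (-b)) ^ (n + m) * g (n + m) := by
        rw [← hn, hg _ ((div_lt_comm₀ hs (by positivity)).1 hl').le, mul_one]
    _ ≤ _ := ENNReal.le_tsum (f := fun n => ((p : ℝ≥0∞) ^ (-b)) ^ (n + m) * g (n + m)) n

lemma tsum_rpow_neg_pow_mul_cellMeasure_le (hp : 1 < p) (hb : 0 < b) (hs : s ∈ Set.Ioc 0 1)
    {d : ℕ} (hd : d ≠ 0) (m : ℕ) :
    ∑' n, ((p : ℝ≥0∞) ^ (-b)) ^ (n + m) * cellMeasure (p ^ (n + m)) 1 (Set.Iic s) ^ d ≤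
      (1 - (p : ℝ≥0∞) ^ (-b))⁻¹ * ENNReal.ofReal (s ^ b) := by
  have : NeZero p := ⟨by lia⟩
  calc _ ≤ ∑' n, ((p : ℝ≥0∞) ^ (-b)) ^ n * cellMeasure (p ^ n) 1 (Set.Iic s) ^ d :=
        ENNReal.tsum_comp_le_tsum_of_injective (add_left_injective m) _
    _ ≤ _ := tsum_rpow_neg_pow_mul_le hp hb hs (fun n => pow_le_one' prob_le_one _) fun n hn => by
        rw [cellMeasure_Iic_eq_zero (by simpa using hn), zero_pow hd]

lemma rpow_mul_le_tsum_rpow_neg_pow_mul_cellMeasure {m : ℕ} (hp : 1 < p) (hb : 0 < b) (hs : 0 < s)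
    (hsm : s ≤ 2 / (p : ℝ) ^ m) (d : ℕ) :
    ENNReal.ofReal ((2 * p : ℝ)⁻¹ ^ b) * ENNReal.ofReal (s ^ b) ≤
      ∑' n, ((p : ℝ≥0∞) ^ (-b)) ^ (n + m) * cellMeasure (p ^ (n + m)) 1 (Set.Iic s) ^ d := by
  have : NeZero p := ⟨by lia⟩
  refine rpow_mul_le_tsum_rpow_neg_pow_mul
    (g := fun n => cellMeasure (p ^ n) 1 (Set.Iic s) ^ d) hp hb hs hsm fun n hn => ?_
  rw [cellMeasure_Iic_eq_one (by simpa [one_add_one_eq_two] using hn), one_pow]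

variable {ι : Type*} {k : ℕ} {J : Finset ι} {μ : Measure (ι → ℝ)}

/-- In coordinate planes of dimension more than `k`, the measure `μ` has mass near the corner `0`
only for planes inside that of `J`, and at most of order `s ^ b` there. -/
structure IsCornerConcentrated (k : ℕ) (J : Finset ι) (b : ℝ) (μ : Measure (ι → ℝ)) : Prop where
  eventually_eq_zero : ∀ Z : Finset ι, k < Z.card → ¬ Z ⊆ J →
    ∀ᶠ s in 𝓝[>] (0 : ℝ), μ (lowerCorner Z s) = 0
  exists_eventually_le : ∀ Z : Finset ι, k < Z.card →
    ∃ C ≠ (⊤ : ℝ≥0∞), ∀ᶠ s in 𝓝[>] (0 : ℝ), μ (lowerCorner Z s) ≤ C * ENNReal.ofReal (s ^ b)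

lemma IsCornerConcentrated.smul (h : IsCornerConcentrated k J b μ) {A : ℝ≥0∞} (hA : A ≠ ⊤) :
    IsCornerConcentrated k J b (A • μ) where
  eventually_eq_zero Z hZ hZJ := by
    filter_upwards [h.eventually_eq_zero Z hZ hZJ] with s hs
    rw [Measure.smul_apply, hs, smul_zero]
  exists_eventually_le Z hZ := by
    obtain ⟨C, hC, hle⟩ := h.exists_eventually_le Z hZ
    refine ⟨A * C, ENNReal.mul_ne_top hA hC, ?_⟩
    filter_upwards [hle] with s hs
    rw [Measure.smul_apply, smul_eq_mul, mul_assoc]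
    gcongr

open Classical in
lemma exists_geometric_superposition [Fintype ι] (k : ℕ) (hp : p.Prime) (hcard : Fintype.card ι ≤ p)
    {m : ℕ} (hm : 2 ≤ m) (J : Finset ι) (b : ℝ) :
    ∃ μ : Measure (ι → ℝ),
      HasUniformMarginals k (∑' n, ((p : ℝ≥0∞) ^ (k - b)) ^ (n + m)) μ ∧
      ∀ Z : Finset ι, k < Z.card → ∀ s ≤ (2 * p : ℝ)⁻¹, μ (lowerCorner Z s) = if Z ⊆ J then
        ∑' n, ((p : ℝ≥0∞) ^ (-b)) ^ (n + m) *
          cellMeasure (p ^ (n + m)) 1 (Set.Iic s) ^ Z.card else 0 := by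
  choose ν hν hcorner using fun n => exists_prime_pow_gridMeasure_lowerCorner_eq k hp hcard
    (hm.trans (Nat.le_add_left m n)) J
  refine ⟨Measure.sum fun n => ((p : ℝ≥0∞) ^ (k - b)) ^ (n + m) • ν n, ?_, fun Z hZ s hs => ?_⟩
  · simpa only [mul_one] using HasUniformMarginals.sum fun n => (hν n).smul _
  · simp only [Measure.sum_apply _ (measurableSet_lowerCorner Z s), Measure.smul_apply,
      smul_eq_mul, hcorner _ Z hZ s hs]
    split_ifs
    · simp only [← mul_assoc, natCast_rpow_sub_pow_mul_inv_pow hp.pos]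
    · simp

lemma tendsto_tsum_pow_add {q : ℝ≥0∞} (hq : q < 1) :
    Tendsto (fun m => ∑' n, q ^ (n + m)) atTop (𝓝 0) :=
  ENNReal.tendsto_sum_nat_add _ (by simpa using inv_one_sub_ne_top hq)

lemma exists_isCornerConcentrated [Finite ι] (hJ : k < J.card) (hb : k < b) :
    ∃ κ ≠ (0 : ℝ≥0∞), ∀ ε ≠ (0 : ℝ≥0∞), ∃ (t : ℝ≥0∞) (μ : Measure (ι → ℝ)), t ≤ ε ∧
      HasUniformMarginals k t μ ∧ IsCornerConcentrated k J b μ ∧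
      ∀ᶠ s in 𝓝[>] (0 : ℝ), κ * ENNReal.ofReal (s ^ b) ≤ μ (lowerCorner J s) := by
  classical
  have := Fintype.ofFinite ι
  obtain ⟨p, hcard, hp⟩ := Nat.exists_infinite_primes (Fintype.card ι)
  have hb0 : 0 < b := k.cast_nonneg.trans_lt hb
  have hp0 : (0 : ℝ) < p := Nat.cast_pos.2 hp.pos
  refine ⟨ENNReal.ofReal ((2 * p : ℝ)⁻¹ ^ b), (ENNReal.ofReal_pos.2 (by positivity)).ne',
    fun ε hε => ?_⟩
  have hmass := tendsto_tsum_pow_add (natCast_rpow_lt_one_of_neg hp.one_lt (sub_neg.2 hb))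
  obtain ⟨m, hmε, hm⟩ :=
    ((hmass.eventually_le_const hε.bot_lt).and (eventually_ge_atTop 2)).exists
  obtain ⟨μ, hμ, hcorner⟩ := exists_geometric_superposition k hp hcard hm J b
  have hsmall : ∀ᶠ s in 𝓝[>] (0 : ℝ), s ∈ Set.Ioc 0 (2 * p : ℝ)⁻¹ :=
    Ioc_mem_nhdsGT (by positivity)
  refine ⟨_, μ, hmε, hμ, ⟨fun Z hZ hZJ => ?_, fun Z hZ => ⟨(1 - (p : ℝ≥0∞) ^ (-b))⁻¹,
    inv_one_sub_ne_top (natCast_rpow_lt_one_of_neg hp.one_lt (neg_neg_of_pos hb0)), ?_⟩⟩, ?_⟩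
  · filter_upwards [hsmall] with s hs
    rw [hcorner Z hZ s hs.2, if_neg hZJ]
  · filter_upwards [hsmall, Ioc_mem_nhdsGT one_pos] with s hs hs1
    rw [hcorner Z hZ s hs.2]
    split_ifs
    · exact tsum_rpow_neg_pow_mul_cellMeasure_le hp.one_lt hb0 hs1 (by lia) m
    · exact zero_le
  · filter_upwards [hsmall, Ioc_mem_nhdsGT (show (0 : ℝ) < 2 / p ^ m by positivity)] with s hs hsm
    rw [hcorner J hJ s hs.2, if_pos subset_rfl]
    exact rpow_mul_le_tsum_rpow_neg_pow_mul_cellMeasure hp.one_lt hb0 hs.1 hsm.2 J.card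

lemma exists_isCornerConcentrated_liminf_eq [Finite ι] (hJ : k < J.card) (hb : k < b)
    {α ε : ℝ≥0∞} (hα : α ≠ ⊤) (hε : ε ≠ 0) :
    ∃ (t : ℝ≥0∞) (μ : Measure (ι → ℝ)), t ≤ ε ∧ HasUniformMarginals k t μ ∧
      IsCornerConcentrated k J b μ ∧
      liminf (fun s => μ (lowerCorner J s) / ENNReal.ofReal (s ^ b)) (𝓝[>] 0) = α := by
  obtain ⟨κ, hκ, hexists⟩ := exists_isCornerConcentrated hJ hb
  obtain ⟨t, μ, ht, hμ, hconc, hlower⟩ :=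
    hexists (ε / (α / κ)) (ENNReal.div_ne_zero.2 ⟨hε, ENNReal.div_ne_top hα hκ⟩)
  obtain ⟨C, hC, hupper⟩ := hconc.exists_eventually_le J hJ
  set L := liminf (fun s => μ (lowerCorner J s) / ENNReal.ofReal (s ^ b)) (𝓝[>] 0) with hL
  have hκL : κ ≤ L := by
    refine le_liminf_of_le (by isBoundedDefault) ?_
    filter_upwards [hlower, self_mem_nhdsWithin] with s hs hs0
    rwa [ENNReal.le_div_iff_mul_le
      (.inl (ENNReal.ofReal_pos.2 (Real.rpow_pos_of_pos hs0 b)).ne') (.inl ENNReal.ofReal_ne_top)]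
  have hLC : L ≤ C :=
    (liminf_le_liminf (hupper.mono fun s hs => ENNReal.div_le_of_le_mul hs)).trans_eq
      (liminf_const C)
  have hL0 : L ≠ 0 := (hκ.bot_lt.trans_le hκL).ne'
  have hA : α / L ≠ ⊤ := ENNReal.div_ne_top hα hL0
  refine ⟨α / L * t, (α / L) • μ, ?_, hμ.smul _, hconc.smul hA, ?_⟩
  · calc α / L * t ≤ α / κ * (ε / (α / κ)) := by gcongr
      _ ≤ ε := ENNReal.mul_div_le
  · simp_rw [Measure.smul_apply, smul_eq_mul, mul_div_assoc]
    rw [ENNReal.liminf_const_mul_of_ne_top hA, ← hL,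
      ENNReal.div_mul_cancel hL0 (ne_top_of_le_ne_top hC hLC)]

end GeometricSuperposition

section Mixture

variable {ι : Type*} {k : ℕ} {b τ : ℝ} {J Z : Finset ι} {μ : Measure (ι → ℝ)}

lemma tendsto_ofReal_rpow_nhdsGT_zero (hb : 0 < b) :
    Tendsto (fun s : ℝ => ENNReal.ofReal (s ^ b)) (𝓝[>] 0) (𝓝 0) := by
  have hpow := (Real.continuousAt_rpow_const 0 b (.inr hb.le)).tendsto
  rw [Real.zero_rpow hb.ne'] at hpow
  simpa using ENNReal.tendsto_ofReal (hpow.mono_left nhdsWithin_le_nhds)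

lemma tendsto_div_rpow_of_eventually_le {f : ℝ → ℝ≥0∞} {C : ℝ≥0∞} (hC : C ≠ ⊤) (hτ : τ < b)
    (hf : ∀ᶠ s in 𝓝[>] (0 : ℝ), f s ≤ C * ENNReal.ofReal (s ^ b)) :
    Tendsto (fun s => f s / ENNReal.ofReal (s ^ τ)) (𝓝[>] 0) (𝓝 0) := by
  have hlim : Tendsto (fun s : ℝ => C * ENNReal.ofReal (s ^ (b - τ))) (𝓝[>] 0) (𝓝 0) := by
    simpa using ENNReal.Tendsto.const_mul
      (tendsto_ofReal_rpow_nhdsGT_zero (sub_pos.2 hτ)) (.inr hC)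
  refine tendsto_of_tendsto_of_tendsto_of_le_of_le' tendsto_const_nhds hlim
    (.of_forall fun _ => zero_le) ?_
  filter_upwards [hf, self_mem_nhdsWithin] with s hs hs0
  refine ENNReal.div_le_of_le_mul (hs.trans_eq ?_)
  rw [mul_assoc, ← ENNReal.ofReal_mul (Real.rpow_pos_of_pos hs0 _).le, ← Real.rpow_add hs0,
    sub_add_cancel]

lemma IsCornerConcentrated.tendsto_div_rpow (h : IsCornerConcentrated k J b μ) (hZ : k < Z.card)
    (hτ : Z ⊆ J → τ < b) :
    Tendsto (fun s => μ (lowerCorner Z s) / ENNReal.ofReal (s ^ τ)) (𝓝[>] 0) (𝓝 0) := by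
  by_cases hZJ : Z ⊆ J
  · obtain ⟨C, hC, hle⟩ := h.exists_eventually_le Z hZ
    exact tendsto_div_rpow_of_eventually_le hC (hτ hZJ) hle
  · refine tendsto_const_nhds.congr' ?_
    filter_upwards [h.eventually_eq_zero Z hZ hZJ] with s hs
    rw [hs, ENNReal.zero_div]

lemma exists_isCornerConcentrated_empty [Finite ι] (k : ℕ) (b : ℝ) :
    ∃ m : Measure (ι → ℝ), HasUniformMarginals k 1 m ∧ IsCornerConcentrated k ∅ b m := by
  have := Fintype.ofFinite ι
  obtain ⟨p, hcard, hp⟩ := Nat.exists_infinite_primes (Fintype.card ι)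
  have hp0 : (0 : ℝ) < p := Nat.cast_pos.2 hp.pos
  obtain ⟨m, hm, hcorner⟩ := exists_prime_pow_gridMeasure_lowerCorner_eq k hp hcard le_rfl ∅
  have hzero (Z : Finset ι) (hZ : k < Z.card) : ∀ᶠ s in 𝓝[>] (0 : ℝ), m (lowerCorner Z s) = 0 := by
    filter_upwards [Ioc_mem_nhdsGT (show (0 : ℝ) < (2 * p : ℝ)⁻¹ by positivity)] with s hs
    rw [hcorner Z hZ s hs.2, if_neg fun h => by simp [Finset.subset_empty.1 h] at hZ]
  exact ⟨m, hm, fun Z hZ _ => hzero Z hZ,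
    fun Z hZ => ⟨0, ENNReal.zero_ne_top, (hzero Z hZ).mono fun s hs => by simp [hs]⟩⟩

lemma liminf_sum_of_tendsto_zero {T X : Type*} [Fintype T] {l : Filter X} {f : T → X → ℝ≥0∞}
    (i : T) (hf : ∀ j ≠ i, Tendsto (f j) l (𝓝 0)) :
    liminf (fun x => ∑ j, f j x) l = liminf (f i) l := by
  classical
  have hrest : Tendsto (fun x => ∑ j ∈ Finset.univ.erase i, f j x) l (𝓝 0) := by
    simpa using tendsto_finsetSum _ fun j hj => hf j (Finset.ne_of_mem_erase hj)
  simp_rw [← Finset.add_sum_erase _ _ (Finset.mem_univ i)]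
  exact ENNReal.liminf_add_of_right_tendsto_zero hrest (f i)

lemma exists_hasUniformMarginals_liminf_eq [Finite ι] {a : Finset ι → ℝ≥0∞} {b : Finset ι → ℝ}
    (ha : ∀ J, a J ≠ ⊤) (hkb : ∀ J, k < J.card → k < b J)
    (hb : ∀ Z J, k < Z.card → Z ⊂ J → b Z < b J) :
    ∃ c : Measure (ι → ℝ), HasUniformMarginals k 1 c ∧ ∀ Z, k < Z.card →
      liminf (fun s => c (lowerCorner Z s) / ENNReal.ofReal (s ^ b Z)) (𝓝[>] 0) = a Z := by
  classical
  have := Fintype.ofFinite {J : Finset ι // k < J.card}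
  choose t μ ht hμ hconc hliminf using fun J : {J : Finset ι // k < J.card} =>
    exists_isCornerConcentrated_liminf_eq J.2 (hkb J J.2) (ha J)
      (ENNReal.inv_ne_zero.2 (ENNReal.natCast_ne_top (Fintype.card {J : Finset ι // k < J.card})))
  obtain ⟨m, hm, hmconc⟩ := exists_isCornerConcentrated_empty (ι := ι) k 0
  have htotal : ∑' J, t J ≤ 1 := by
    calc ∑' J, t J ≤ ∑' _ : {J : Finset ι // k < J.card}, _ := ENNReal.tsum_le_tsum ht
      _ ≤ 1 := by
        rw [tsum_fintype, Finset.sum_const, Finset.card_univ, nsmul_eq_mul]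
        exact ENNReal.mul_inv_le_one _
  refine ⟨(1 - ∑' J, t J) • m + Measure.sum μ, ?_, fun Z hZ => ?_⟩
  · simpa only [mul_one, tsub_add_cancel_of_le htotal]
      using (hm.smul (1 - ∑' J, t J)).add (.sum hμ)
  · have hm0 := (hmconc.smul (A := 1 - ∑' J, t J)
      (ENNReal.sub_ne_top ENNReal.one_ne_top)).tendsto_div_rpow hZ (τ := b Z)
        fun h => by simp [Finset.subset_empty.1 h] at hZ
    have hsum := liminf_sum_of_tendsto_zero ⟨Z, hZ⟩ fun J hJ =>
      (hconc J).tendsto_div_rpow hZ (τ := b Z) fun hZJ => hb Z J hZ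
        (hZJ.ssubset_of_ne fun h => hJ (Subtype.ext h.symm))
    refine Eq.trans ?_
      ((ENNReal.liminf_add_of_left_tendsto_zero hm0 _).trans (hsum.trans (hliminf ⟨Z, hZ⟩)))
    simp only [Measure.add_apply, Measure.sum_apply _ (measurableSet_lowerCorner Z _),
      tsum_fintype, div_eq_mul_inv, add_mul, Finset.sum_mul, Pi.add_def]

end Mixture

section Tails

variable {r k : ℕ} {c : Measure (Fin r → ℝ)} {J : Finset (Fin r)} {β τ σ : ℝ}

lemma tailLiminf_eq_liminf_lowerCorner (hc : IsCopulaOfOrder r k c) (J : Finset (Fin r)) (τ : ℝ) :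
    tailLiminf r c J τ =
      liminf (fun s => c (lowerCorner J s) / ENNReal.ofReal (s ^ τ)) (𝓝[>] 0) := by
  have := hc.1
  have hcube : c (cube r)ᶜ = 0 :=
    (prob_compl_eq_zero_iff (.univ_pi fun _ => measurableSet_Icc)).2 hc.2.1
  simp_rw [tailLiminf, measure_inter_conull hcube, lowerCorner]

lemma tailLiminf_mono (hτσ : τ ≤ σ) : tailLiminf r c J τ ≤ tailLiminf r c J σ := by
  refine liminf_le_liminf ?_
  filter_upwards [Ioo_mem_nhdsGT one_pos] with s hs
  exact ENNReal.div_le_div_left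
    (ENNReal.ofReal_le_ofReal (Real.rpow_le_rpow_of_exponent_ge hs.1 hs.2.le hτσ)) _

lemma tailLiminf_eq_top_of_lt (h : tailLiminf r c J τ ≠ 0) (hτσ : τ < σ) :
    tailLiminf r c J σ = ⊤ := by
  have hinv : Tendsto (fun s : ℝ => (ENNReal.ofReal (s ^ (σ - τ)))⁻¹) (𝓝[>] 0) (𝓝 ⊤) := by
    rw [← ENNReal.inv_zero, tendsto_inv_iff]
    exact tendsto_ofReal_rpow_nhdsGT_zero (sub_pos.2 hτσ)
  refine top_le_iff.1 ?_
  calc ⊤ = tailLiminf r c J τ *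
        liminf (fun s : ℝ => (ENNReal.ofReal (s ^ (σ - τ)))⁻¹) (𝓝[>] 0) := by
        rw [hinv.liminf_eq, ENNReal.mul_top h]
    _ ≤ _ := ENNReal.le_liminf_mul
    _ = tailLiminf r c J σ := by
      refine liminf_congr ?_
      filter_upwards [self_mem_nhdsWithin] with s (hs : 0 < s)
      have hsplit : ENNReal.ofReal (s ^ σ) =
          ENNReal.ofReal (s ^ τ) * ENNReal.ofReal (s ^ (σ - τ)) := by
        rw [← ENNReal.ofReal_mul (by positivity), ← Real.rpow_add hs, add_sub_cancel]
      rw [Pi.mul_apply, hsplit, div_eq_mul_inv, div_eq_mul_inv, mul_assoc,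
        ENNReal.mul_inv (.inr ENNReal.ofReal_ne_top) (.inl ENNReal.ofReal_ne_top)]

lemma tailDeg_eq_ofReal (hβ : 0 ≤ β) (h0 : tailLiminf r c J β ≠ 0)
    (htop : tailLiminf r c J β ≠ ⊤) : tailDeg r c J = ENNReal.ofReal β := by
  refine le_antisymm (le_of_forall_gt_imp_ge_of_dense fun σ hσ => ?_) (le_sInf fun τ hτ => ?_)
  · rcases eq_or_ne σ ⊤ with rfl | hσtop
    · exact le_top
    · exact sInf_le
        (tailLiminf_eq_top_of_lt h0 ((ENNReal.ofReal_lt_iff_lt_toReal hβ hσtop).1 hσ))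
  · by_contra! hlt
    have hτβ : τ.toReal ≤ β := ENNReal.toReal_le_of_le_ofReal hβ hlt.le
    exact htop (top_le_iff.1 ((show tailLiminf r c J τ.toReal = ⊤ from hτ) ▸ tailLiminf_mono hτβ))

lemma tailDeg_eq_and_tailCoef_eq (hβ : 0 ≤ β) {α : ℝ≥0∞} (hα0 : α ≠ 0) (hα : α ≠ ⊤)
    (h : tailLiminf r c J β = α) : tailDeg r c J = ENNReal.ofReal β ∧ tailCoef r c J = α := by
  have hdeg : tailDeg r c J = ENNReal.ofReal β :=
    tailDeg_eq_ofReal hβ (h.trans_ne hα0) (h.trans_ne hα)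
  exact ⟨hdeg, by rw [tailCoef, hdeg, ENNReal.toReal_ofReal hβ, h]⟩

lemma HasUniformMarginals.tailLiminf_card (h : HasUniformMarginals k 1 c) (hk : 1 ≤ k)
    (hkr : k ≤ r) (hJ : J.card ≤ k) : tailLiminf r c J J.card = 1 := by
  rw [tailLiminf_eq_liminf_lowerCorner (h.isCopulaOfOrder hk hkr)]
  refine (liminf_congr ?_).trans (liminf_const 1)
  filter_upwards [Ioc_mem_nhdsGT one_pos] with s hs
  rw [(h.mono hJ (by simpa using hkr)).measure_lowerCorner hs.2, one_mul, Real.rpow_natCast,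
    ENNReal.ofReal_pow hs.1.le]
  exact ENNReal.div_self (pow_ne_zero _ (ENNReal.ofReal_pos.2 hs.1).ne')
    (ENNReal.pow_ne_top ENNReal.ofReal_ne_top)

end Tails

theorem stmt_1 (r k : ℕ) (hr : 1 ≤ r) (hk : 1 ≤ k) (hkr : k ≤ r)
    (a b : Finset (Fin r) → ℝ)
    -- `a`, `b` take values in `(0,∞)` on nonempty subsets
    (hpos : ∀ J : Finset (Fin r), J.Nonempty → 0 < a J ∧ 0 < b J)
    -- `a(J) = 1` and `b(J) = |J|` whenever `|J| ≤ k`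
    (hlow : ∀ J : Finset (Fin r), J.Nonempty → J.card ≤ k → a J = 1 ∧ b J = J.card)
    -- `b` is increasing: `b(J) < b(J')` whenever `J ⊊ J'`
    (hbinc : ∀ J J' : Finset (Fin r), J.Nonempty → J ⊂ J' → b J < b J') :
    ∃ c : Measure (Fin r → ℝ), IsCopulaOfOrder r k c ∧
      ∀ J : Finset (Fin r), J.Nonempty →
        tailDeg r c J = ENNReal.ofReal (b J) ∧
        tailCoef r c J = ENNReal.ofReal (a J) := by
  have hkb (J : Finset (Fin r)) (hJ : k < J.card) : k < b J := by
    obtain ⟨I, hIJ, hI⟩ := Finset.exists_subset_card_eq hJ.le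
    have hI0 : I.Nonempty := Finset.card_pos.1 (by lia)
    calc (k : ℝ) = b I := by rw [(hlow I hI0 hI.le).2, hI]
      _ < b J := hbinc I J hI0 (hIJ.ssubset_of_ne (by rintro rfl; lia))
  obtain ⟨c, hc, hliminf⟩ := exists_hasUniformMarginals_liminf_eq
    (fun J => ENNReal.ofReal_ne_top (r := a J)) hkb
    fun Z J hZ => hbinc Z J (Finset.card_pos.1 (by lia))
  have hcopula : IsCopulaOfOrder r k c := hc.isCopulaOfOrder hk hkr
  refine ⟨c, hcopula, fun J hJ => tailDeg_eq_and_tailCoef_eq (hpos J hJ).2.le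
    (ENNReal.ofReal_pos.2 (hpos J hJ).1).ne' ENNReal.ofReal_ne_top ?_⟩
  rcases le_or_gt J.card k with hJk | hkJ
  · rw [(hlow J hJ hJk).1, (hlow J hJ hJk).2, hc.tailLiminf_card hk hkr hJk, ENNReal.ofReal_one]
  · rw [tailLiminf_eq_liminf_lowerCorner hcopula, hliminf J hkJ]
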